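/- arXiv:2604.22394 — 3 statements merged into one kernel-verified Lean document; each statement's English description precedes it below -/
import Mathlib

section
/- Let F be a topological space and r an equivalence relation on F; endow the quotient F/r with the quotient topology and let q : F → F/r be the quotient map. Call a subset of F saturated if it is a union of equivalence classes of r. Assume that every point of F has a saturated open neighbourhood whose closure is compact. Then for every subset K ⊆ F/r that is both compact and closed, the preimage q⁻¹(K) is compact. -/
/-- **Lemma 6.8 (topological core).** If every point of `F` has a saturated open
neighbourhood with compact closure, then the quotient map `q : F → F/r` is proper:
the preimage of every compact closed set is compact. -/
theorem quotient_map_proper_of_saturated_precompact_nbhds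
    {F : Type*} [TopologicalSpace F] (r : Setoid F)
    (h : ∀ x : F, ∃ U : Set F, IsOpen U ∧ x ∈ U ∧
      (∀ ⦃a b : F⦄, a ∈ U → r.r a b → b ∈ U) ∧ IsCompact (closure U)) :
    ∀ K : Set (Quotient r), IsCompact K → IsClosed K →
      IsCompact (Quotient.mk r ⁻¹' K) := by
  intro K hK hKc
  choose U hUo hxU hUs hUc using h
  have hpre : ∀ x, Quotient.mk r ⁻¹' (Quotient.mk r '' U x) = U x := by
    intro x
    ext y
    constructor
    · rintro ⟨z, hz, hzy⟩
      exact hUs x hz (Quotient.exact hzy)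
    · intro hy
      exact ⟨y, hy, rfl⟩
  have hq : Topology.IsQuotientMap (Quotient.mk r) := isQuotientMap_quot_mk
  obtain ⟨t, ht⟩ := hK.elim_finite_subcover (fun x => Quotient.mk r '' U x)
    (fun x => by
      rw [← hq.isOpen_preimage, hpre]
      exact hUo x)
    (by
      intro y _
      induction y using Quotient.inductionOn with
      | h x => exact Set.mem_iUnion.2 ⟨x, x, hxU x, rfl⟩)
  refine (t.isCompact_biUnion (fun x _ => hUc x)).of_isClosed_subset
    (hKc.preimage hq.continuous) ?_
  intro y hy
  obtain ⟨x, hx, hyx⟩ := Set.mem_iUnion₂.1 (ht hy)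
  have hy2 : y ∈ U x := by
    rw [← hpre x]
    exact hyx
  exact Set.mem_iUnion₂.2 ⟨x, hx, subset_closure hy2⟩
end

section
/- Let E be a finite-dimensional real normed vector space and let v : ℝ × E → E be continuous and locally Lipschitz (every point of ℝ × E has a neighbourhood on which v is Lipschitz). Let S ⊆ E be a closed set such that v(t, x) = 0 for all x ∈ S and all t ∈ [0,1], and assume that every connected component of E ∖ S is bounded. Then for every x₀ ∈ E there exists a curve γ : ℝ → E with γ(0) = x₀ such that γ has derivative v(t, γ(t)) at every t ∈ [0,1]; that is, the non-autonomous ODE γ'(t) = v(t, γ(t)) has a solution defined on all of [0,1] through every initial point. -/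
open Set

/-- **Lemma 6.5 (analytic core, completeness).** Let `v : ℝ × E → E` be a continuous,
locally Lipschitz time-dependent vector field on a finite-dimensional real normed
space `E`. If `v` vanishes at all times `t ∈ [0,1]` on a closed set `S ⊆ E` whose
complement has only bounded connected components, then through every initial point
the ODE `γ' = v (t, γ t)` has a solution defined on all of `[0,1]`. -/
theorem ode_complete_of_vanishing_on_closed_set
    {E : Type*} [NormedAddCommGroup E] [NormedSpace ℝ E] [FiniteDimensional ℝ E]
    (v : ℝ × E → E) (hv : Continuous v)
    (hlip : ∀ p : ℝ × E, ∃ U ∈ nhds p, ∃ K : NNReal, LipschitzOnWith K v U)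
    (S : Set E) (hS : IsClosed S)
    (hzero : ∀ x ∈ S, ∀ t ∈ Icc (0 : ℝ) 1, v (t, x) = 0)
    (hbounded : ∀ x ∈ Sᶜ, Bornology.IsBounded (connectedComponentIn Sᶜ x)) :
    ∀ x₀ : E, ∃ γ : ℝ → E, γ 0 = x₀ ∧
      ∀ t ∈ Icc (0 : ℝ) 1, HasDerivAt γ (v (t, γ t)) t := by
  classical
  intro x₀
  by_cases hx₀ : x₀ ∈ S
  · refine ⟨fun _ => x₀, rfl, fun t ht => ?_⟩
    rw [hzero x₀ hx₀ t ht]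
    exact hasDerivAt_const t x₀
  haveI : ProperSpace E := FiniteDimensional.proper ℝ E
  set C := connectedComponentIn Sᶜ x₀ with hC
  have hCo : IsOpen C := hS.isOpen_compl.connectedComponentIn
  have hx₀C : x₀ ∈ C := mem_connectedComponentIn hx₀
  have hcpt : IsCompact (closure C) := (hbounded x₀ hx₀).isCompact_closure
  -- boundary points lie in S
  have hbd : ∀ z ∈ closure C, z ∉ C → z ∈ S := by
    intro z hz hzC
    by_contra hzS
    have ho : IsOpen (connectedComponentIn Sᶜ z) := hS.isOpen_compl.connectedComponentIn
    obtain ⟨y, hy1, hy2⟩ := mem_closure_iff.1 hz _ ho (mem_connectedComponentIn hzS)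
    have h1 := connectedComponentIn_eq hy1
    have h2 := connectedComponentIn_eq hy2
    apply hzC
    rw [hC, h2, ← h1]
    exact mem_connectedComponentIn hzS
  -- Lipschitz on compact
  have hcptP : IsCompact (Icc (0:ℝ) 1 ×ˢ closure C) := isCompact_Icc.prod hcpt
  obtain ⟨K, hK⟩ : ∃ K, LipschitzOnWith K v (Icc (0:ℝ) 1 ×ˢ closure C) := by
    apply LocallyLipschitzOn.exists_lipschitzOnWith_of_compact hcptP
    intro p _
    obtain ⟨U, hU, K, hK⟩ := hlip p
    exact ⟨K, U, mem_nhdsWithin_of_mem_nhds hU, hK⟩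
  obtain ⟨M, hM⟩ := hcptP.exists_bound_of_continuousOn hv.continuousOn
  set c : ℝ → ℝ := fun t => max 0 (min t 1) with hc
  have hcm : ∀ t, c t ∈ Icc (0:ℝ) 1 := fun t =>
    ⟨le_max_left _ _, max_le zero_le_one (min_le_right _ _)⟩
  have hcc : Continuous c := by fun_prop
  have hce : ∀ t ∈ Icc (0:ℝ) 1, c t = t := by
    intro t ht
    simp [hc, ht.1, ht.2]
  set w : ℝ → E → E := fun t x => if x ∈ C then v (c t, x) else 0 with hw
  have hLK : ∀ t, ∀ x ∈ closure C, ∀ y ∈ closure C,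
      dist (v (c t, x)) (v (c t, y)) ≤ K * dist x y := by
    intro t x hx y hy
    have := hK.dist_le_mul (c t, x) ⟨hcm t, hx⟩ (c t, y) ⟨hcm t, hy⟩
    simpa [Prod.dist_eq] using this
  have hmix : ∀ t, ∀ x ∈ C, ∀ y ∉ C, dist (v (c t, x)) 0 ≤ K * dist x y := by
    intro t x hx y hy
    obtain ⟨z, hz, hzc, hzC⟩ : ∃ z ∈ segment ℝ x y, z ∈ closure C ∧ z ∉ C := by
      by_contra! hcon
      obtain ⟨z, -, h1, h2⟩ := (convex_segment x y).isPreconnected C (closure C)ᶜ hCo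
        isClosed_closure.isOpen_compl
        (fun z hz => by
          by_cases h : z ∈ closure C
          · exact Or.inl (hcon z hz h)
          · exact Or.inr h)
        ⟨x, left_mem_segment ℝ x y, hx⟩
        ⟨y, right_mem_segment ℝ x y, fun h => hy (hcon y (right_mem_segment ℝ x y) h)⟩
      exact h2 (subset_closure h1)
    have h := hLK t x (subset_closure hx) z hzc
    rw [hzero z (hbd z hzc hzC) _ (hcm t)] at h
    refine h.trans (mul_le_mul_of_nonneg_left ?_ K.2)
    have := dist_add_dist_of_mem_segment hz
    linarith [dist_nonneg (x := z) (y := y)]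
  have hwl : ∀ t, LipschitzWith K (w t) := by
    intro t
    refine LipschitzWith.of_dist_le_mul fun x y => ?_
    by_cases hx : x ∈ C <;> by_cases hy : y ∈ C
    · simpa [hw, hx, hy] using hLK t x (subset_closure hx) y (subset_closure hy)
    · simpa [hw, hx, hy] using hmix t x hx y hy
    · simpa [hw, hx, hy, dist_comm] using hmix t y hy x hx
    · simp only [hw, hx, hy, if_false, dist_self]
      positivity
  have hPL : IsPicardLindelof w (tmin := -1) (tmax := 2) ⟨0, by norm_num, by norm_num⟩ x₀
      (2 * M.toNNReal) 0 M.toNNReal K := by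
    refine ⟨fun t _ => (hwl t).lipschitzOnWith, fun x _ => ?_, fun t _ x _ => ?_, ?_⟩
    · by_cases hx : x ∈ C
      · simp only [hw, hx, if_true]
        exact Continuous.continuousOn (by fun_prop)
      · simp only [hw, hx, if_false]
        exact continuousOn_const
    · by_cases hx : x ∈ C
      · simp only [hw, hx, if_true]
        exact (hM (c t, x) ⟨hcm t, subset_closure hx⟩).trans (Real.le_coe_toNNReal M)
      · simp [hw, hx]
    · norm_num
      linarith
  obtain ⟨γ, hγ0, hγ⟩ := hPL.exists_eq_forall_mem_Icc_hasDerivWithinAt₀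
  have hγd : ∀ t ∈ Ioo (-1:ℝ) 2, HasDerivAt γ (w t (γ t)) t := fun t ht =>
    (hγ t (Ioo_subset_Icc_self ht)).hasDerivAt (Icc_mem_nhds ht.1 ht.2)
  refine ⟨γ, hγ0, fun t ht => ?_⟩
  have ht' : t ∈ Ioo (-1:ℝ) 2 := ⟨by linarith [ht.1], by linarith [ht.2]⟩
  have hmem : γ t ∈ C := by
    by_contra hn
    have := ODE_solution_unique_of_mem_Ioo (v := w) (K := K) (s := fun _ => univ)
      (f := γ) (g := fun _ => γ t) (fun t _ => (hwl t).lipschitzOnWith) ht'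
      (fun s hs => ⟨hγd s hs, mem_univ _⟩)
      (fun s _ => ⟨by simpa [hw, hn] using hasDerivAt_const s (γ t), mem_univ _⟩) rfl
      (show (0:ℝ) ∈ Ioo (-1:ℝ) 2 by norm_num)
    apply hn
    have h0 : γ 0 = γ t := this
    rw [← h0]
    have : γ 0 = x₀ := hγ0
    rwa [this]
  have := hγd t ht'
  simpa [hw, hmem, hce t ht] using this
end

section
/- Let E be a finite-dimensional real normed vector space and let v : ℝ × E → E be continuous and locally Lipschitz (every point of ℝ × E has a neighbourhood on which v is Lipschitz). Let S ⊆ E be a closed set with v(t, x) = 0 for all x ∈ S and all t ∈ ℝ. Let J ⊆ ℝ be an interval, t₀ ∈ J, and γ : J → E a solution of γ'(t) = v(t, γ(t)) for all t ∈ J. If γ(t₀) ∉ S, then for every t ∈ J the point γ(t) lies in the connected component of γ(t₀) in E ∖ S; in particular, γ never meets S. -/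
open Set

/-- **Lemma 6.5 (intermediate claim).** Let `v : ℝ × E → E` be a continuous, locally
Lipschitz time-dependent vector field vanishing at all times on a closed set `S`.
A solution `γ` of `γ' = v (t, γ t)` on an interval `J` starting (at `t₀ ∈ J`) outside
`S` stays, for all `t ∈ J`, in the connected component of `γ t₀` in `E \ S`. -/
theorem solution_stays_in_component_of_complement
    {E : Type*} [NormedAddCommGroup E] [NormedSpace ℝ E] [FiniteDimensional ℝ E]
    (v : ℝ × E → E) (hv : Continuous v)
    (hlip : ∀ p : ℝ × E, ∃ U ∈ nhds p, ∃ K : NNReal, LipschitzOnWith K v U)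
    (S : Set E) (hS : IsClosed S)
    (hzero : ∀ x ∈ S, ∀ t : ℝ, v (t, x) = 0)
    (J : Set ℝ) (hJ : J.OrdConnected) (t₀ : ℝ) (ht₀ : t₀ ∈ J)
    (γ : ℝ → E) (hγ : ∀ t ∈ J, HasDerivAt γ (v (t, γ t)) t)
    (hstart : γ t₀ ∉ S) :
    ∀ t ∈ J, γ t ∈ connectedComponentIn Sᶜ (γ t₀) := by
  have hcont : ContinuousOn γ J := fun t ht => (hγ t ht).continuousAt.continuousWithinAt
  have hoff : ∀ t ∈ J, γ t ∉ S := by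
    intro t₁ ht₁ hmem
    have key : ∀ a b : ℝ, Icc a b ⊆ J → ∃ K : NNReal, ∀ t ∈ Icc a b,
        LipschitzOnWith K (fun x => v (t, x)) (insert (γ t₁) (γ '' Icc a b)) := by
      intro a b hab
      have hc : IsCompact (Icc a b ×ˢ (insert (γ t₁) (γ '' Icc a b))) :=
        isCompact_Icc.prod ((isCompact_Icc.image_of_continuousOn (hcont.mono hab)).insert _)
      have hl : LocallyLipschitzOn (Icc a b ×ˢ (insert (γ t₁) (γ '' Icc a b))) v := by
        intro p _
        obtain ⟨U, hU, K, hK⟩ := hlip p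
        exact ⟨K, U, mem_nhdsWithin_of_mem_nhds hU, hK⟩
      obtain ⟨K, hK⟩ := hl.exists_lipschitzOnWith_of_compact hc
      refine ⟨K, fun t ht x hx y hy => ?_⟩
      have h := hK (mk_mem_prod ht hx) (mk_mem_prod ht hy)
      simpa [Prod.edist_eq] using h
    have hconst : ∀ t : ℝ, HasDerivAt (fun _ : ℝ => γ t₁) (v (t, γ t₁)) t := by
      intro t
      rw [hzero _ hmem t]
      exact hasDerivAt_const _ _
    have heq : γ t₀ = γ t₁ := by
      rcases le_total t₁ t₀ with h | h
      · have hab : Icc t₁ t₀ ⊆ J := hJ.out ht₁ ht₀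
        obtain ⟨K, hK⟩ := key _ _ hab
        exact ODE_solution_unique_of_mem_Icc_right (v := fun t x => v (t, x))
          (s := fun _ => insert (γ t₁) (γ '' Icc t₁ t₀)) (g := fun _ => γ t₁)
          (fun t ht => hK t (Ico_subset_Icc_self ht)) (hcont.mono hab)
          (fun t ht => (hγ t (hab (Ico_subset_Icc_self ht))).hasDerivWithinAt)
          (fun t ht => Or.inr ⟨t, Ico_subset_Icc_self ht, rfl⟩) continuousOn_const
          (fun t _ => (hconst t).hasDerivWithinAt) (fun t _ => Or.inl rfl) rfl
          (right_mem_Icc.2 h)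
      · have hab : Icc t₀ t₁ ⊆ J := hJ.out ht₀ ht₁
        obtain ⟨K, hK⟩ := key _ _ hab
        exact ODE_solution_unique_of_mem_Icc_left (v := fun t x => v (t, x))
          (s := fun _ => insert (γ t₁) (γ '' Icc t₀ t₁)) (g := fun _ => γ t₁)
          (fun t ht => hK t (Ioc_subset_Icc_self ht)) (hcont.mono hab)
          (fun t ht => (hγ t (hab (Ioc_subset_Icc_self ht))).hasDerivWithinAt)
          (fun t ht => Or.inr ⟨t, Ioc_subset_Icc_self ht, rfl⟩) continuousOn_const
          (fun t _ => (hconst t).hasDerivWithinAt) (fun t _ => Or.inl rfl) rfl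
          (left_mem_Icc.2 h)
    exact hstart (heq ▸ hmem)
  intro t ht
  refine (hJ.isPreconnected.image γ hcont).subset_connectedComponentIn
    (mem_image_of_mem γ ht₀) ?_ (mem_image_of_mem γ ht)
  rintro _ ⟨s, hs, rfl⟩
  exact hoff s hs
end
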